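/- Let R be a local ring, so that the relation 'non-distant' (called parallel, ∥) is an equivalence relation on the projective line P(R). Then every parallel class of P(R) (equivalence class of ∥) has exactly card(rad R) elements, where rad R = R \ R* is the Jacobson radical of R. -/

import Mathlib

/-!
The group `GL₂(R)` acts on `P(R)`, preserves distance, and carries `R(1,0)` to any given point,
so all parallel classes have the same cardinality as that of `R(1,0)`. That class consists of the
points `R(1,t)` with `t` a non-unit, and these are pairwise different:

* if `R(x,y)` is not distant from `R(1,0)`, then `y` is a non-unit (otherwise the rows `(1,0)`,
  `(x,y)` form an invertible matrix), hence `x` is a unit, because admissibility gives an equation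
  `x * x' + y * y' = 1` and the non-units are an ideal; so `R(x,y) = R(1, x⁻¹ * y)`;
* an invertible matrix whose rows span `R(1,0)` and `R(1,t)` has second column `(0, b * t)`, so
  `t` has a left inverse, which is impossible for a non-unit `t` since `1` is a unit.
-/

/-- A pair `(a,b) ∈ R²` is admissible if it is the first row of an invertible 2×2 matrix. -/
def Admissible (R : Type*) [Ring R] (a b : R) : Prop :=
  ∃ γ : (Matrix (Fin 2) (Fin 2) R)ˣ, γ.val 0 0 = a ∧ γ.val 0 1 = b

/-- The projective line over `R`: cyclic left submodules `R(a,b)` with `(a,b)` admissible. -/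
def ProjPoint (R : Type*) [Ring R] : Set (Submodule R (R × R)) :=
  {p | ∃ a b : R, Admissible R a b ∧ p = Submodule.span R {(a, b)}}

/-- Two points are distant if some admissible representatives of them are the two rows of an
invertible 2×2 matrix. -/
def Distant (R : Type*) [Ring R] (p q : Submodule R (R × R)) : Prop :=
  ∃ γ : (Matrix (Fin 2) (Fin 2) R)ˣ,
    p = Submodule.span R {(γ.val 0 0, γ.val 0 1)} ∧
    q = Submodule.span R {(γ.val 1 0, γ.val 1 1)}

/-- Right multiplication of a row vector by a matrix, as a left `R`-linear map. -/
def rowMul (R : Type*) [Ring R] (γ : Matrix (Fin 2) (Fin 2) R) : (R × R) →ₗ[R] (R × R) where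
  toFun v := (v.1 * γ 0 0 + v.2 * γ 1 0, v.1 * γ 0 1 + v.2 * γ 1 1)
  map_add' x y := by
    simp only [Prod.fst_add, Prod.snd_add, add_mul, Prod.mk_add_mk, Prod.mk.injEq]
    constructor <;> abel
  map_smul' c v := by
    simp only [Prod.smul_fst, Prod.smul_snd, smul_eq_mul, RingHom.id_apply, Prod.smul_mk,
      mul_add, mul_assoc]

/-- The action of `GL₂(R)` on the projective line: `R(a,b)·γ = R((a,b)·γ)`. -/
def ptAct (R : Type*) [Ring R] (γ : (Matrix (Fin 2) (Fin 2) R)ˣ)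
    (p : Submodule R (R × R)) : Submodule R (R × R) :=
  p.map (rowMul R γ.val)

/-- The standard chain: image of `P(K)` in `P(R)` under the embedding induced by `f`. -/
def StdChain (K R : Type*) [DivisionRing K] [Ring R] (f : K →+* R) :
    Set (Submodule R (R × R)) :=
  {p | ∃ a b : K, Admissible K a b ∧ p = Submodule.span R {(f a, f b)}}

/-- A `K`-chain: an image of the standard chain under an element of `GL₂(R)`. -/
def IsKChain (K R : Type*) [DivisionRing K] [Ring R] (f : K →+* R)
    (C : Set (Submodule R (R × R))) : Prop :=
  ∃ γ : (Matrix (Fin 2) (Fin 2) R)ˣ, C = (ptAct R γ) '' StdChain K R f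

/-- `R` is a local ring: the non-units form a (two-sided) ideal. -/
def NonunitsIdeal (R : Type*) [Ring R] : Prop :=
  (∀ a b : R, ¬IsUnit a → ¬IsUnit b → ¬IsUnit (a + b)) ∧
  (∀ a x : R, ¬IsUnit a → ¬IsUnit (x * a) ∧ ¬IsUnit (a * x))

section GroupAction

variable {R : Type*} [Ring R]

theorem rowMul_mul (A B : Matrix (Fin 2) (Fin 2) R) (v : R × R) :
    rowMul R (A * B) v = rowMul R B (rowMul R A v) := by
  simp only [rowMul, LinearMap.coe_mk, AddHom.coe_mk, Matrix.mul_apply, Fin.sum_univ_two,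
    mul_add, add_mul, mul_assoc, Prod.mk.injEq]
  constructor <;> abel

theorem rowMul_one (v : R × R) : rowMul R (1 : Matrix (Fin 2) (Fin 2) R) v = v := by
  simp [rowMul]

theorem ptAct_span (γ : (Matrix (Fin 2) (Fin 2) R)ˣ) (v : R × R) :
    ptAct R γ (Submodule.span R {v}) = Submodule.span R {rowMul R γ.val v} := by
  simp [ptAct, Submodule.map_span]

theorem ptAct_inv_ptAct (γ : (Matrix (Fin 2) (Fin 2) R)ˣ) (p : Submodule R (R × R)) :
    ptAct R γ⁻¹ (ptAct R γ p) = p := by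
  have key : (rowMul R γ⁻¹.val).comp (rowMul R γ.val) = LinearMap.id := by
    refine LinearMap.ext fun v => ?_
    rw [LinearMap.comp_apply, ← rowMul_mul, Units.mul_inv, rowMul_one, LinearMap.id_apply]
  rw [ptAct, ptAct, ← Submodule.map_comp, key, Submodule.map_id]

theorem ptAct_ptAct_inv (γ : (Matrix (Fin 2) (Fin 2) R)ˣ) (p : Submodule R (R × R)) :
    ptAct R γ (ptAct R γ⁻¹ p) = p := by
  simpa using ptAct_inv_ptAct γ⁻¹ p

theorem rowMul_row (A B : Matrix (Fin 2) (Fin 2) R) (i : Fin 2) :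
    rowMul R B (A i 0, A i 1) = ((A * B) i 0, (A * B) i 1) := by
  simp [rowMul, Matrix.mul_apply, Fin.sum_univ_two]

theorem ptAct_mem (γ : (Matrix (Fin 2) (Fin 2) R)ˣ) {p : Submodule R (R × R)}
    (hp : p ∈ ProjPoint R) : ptAct R γ p ∈ ProjPoint R := by
  obtain ⟨_, _, ⟨δ, rfl, rfl⟩, rfl⟩ := hp
  refine ⟨_, _, ⟨δ * γ, rfl, rfl⟩, ?_⟩
  rw [ptAct_span, rowMul_row, Units.val_mul]

theorem Distant.ptAct (γ : (Matrix (Fin 2) (Fin 2) R)ˣ) {p q : Submodule R (R × R)}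
    (hpq : Distant R p q) : Distant R (ptAct R γ p) (ptAct R γ q) := by
  obtain ⟨δ, rfl, rfl⟩ := hpq
  refine ⟨δ * γ, ?_, ?_⟩ <;> rw [ptAct_span, rowMul_row, Units.val_mul]

theorem distant_ptAct_iff (γ : (Matrix (Fin 2) (Fin 2) R)ˣ) {p q : Submodule R (R × R)} :
    Distant R (ptAct R γ p) (ptAct R γ q) ↔ Distant R p q := by
  refine ⟨fun hd => ?_, Distant.ptAct γ⟩
  simpa only [ptAct_inv_ptAct] using hd.ptAct γ⁻¹

/-- The set of points that are parallel (that is, not distant) to `p`. -/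
abbrev ParallelClass (p : Submodule R (R × R)) : Type _ :=
  {q : Submodule R (R × R) // q ∈ ProjPoint R ∧ ¬Distant R p q}

/-- `γ ∈ GL₂(R)` maps the parallel class of `p` bijectively onto that of `p·γ`. -/
def parallelClassEquiv (γ : (Matrix (Fin 2) (Fin 2) R)ˣ) (p : Submodule R (R × R)) :
    ParallelClass p ≃ ParallelClass (ptAct R γ p) where
  toFun q := ⟨ptAct R γ q.1, ptAct_mem γ q.2.1, fun hd => q.2.2 ((distant_ptAct_iff γ).1 hd)⟩
  invFun q := ⟨ptAct R γ⁻¹ q.1, ptAct_mem γ⁻¹ q.2.1, fun hd => q.2.2 <| by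
    simpa only [ptAct_ptAct_inv] using hd.ptAct γ⟩
  left_inv q := Subtype.ext (ptAct_inv_ptAct γ q.1)
  right_inv q := Subtype.ext (ptAct_ptAct_inv γ q.1)

end GroupAction

section BaseClass

variable {R : Type*} [Ring R]

theorem span_one_mem (t : R) : Submodule.span R {((1 : R), t)} ∈ ProjPoint R := by
  refine ⟨1, t, ⟨⟨!![1, t; 0, 1], !![1, -t; 0, 1], ?_, ?_⟩, by simp, by simp⟩, rfl⟩ <;>
    simp [Matrix.one_fin_two]

theorem span_one_injective {s t : R}
    (hst : Submodule.span R {((1 : R), s)} = Submodule.span R {((1 : R), t)}) : s = t := by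
  have hs : ((1 : R), s) ∈ Submodule.span R {((1 : R), t)} :=
    hst ▸ Submodule.mem_span_singleton_self _
  obtain ⟨c, hc⟩ := Submodule.mem_span_singleton.1 hs
  simp only [Prod.smul_mk, smul_eq_mul, mul_one, Prod.mk.injEq] at hc
  obtain ⟨rfl, hc⟩ := hc
  simpa using hc.symm

theorem not_distant_span_one (h : NonunitsIdeal R) {t : R} (ht : ¬IsUnit t) :
    ¬Distant R (Submodule.span R {((1 : R), 0)}) (Submodule.span R {((1 : R), t)}) := by
  rintro ⟨δ, h₀, h₁⟩
  have m₀ : (δ.val 0 0, δ.val 0 1) ∈ Submodule.span R {((1 : R), (0 : R))} :=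
    h₀ ▸ Submodule.mem_span_singleton_self _
  have m₁ : (δ.val 1 0, δ.val 1 1) ∈ Submodule.span R {((1 : R), t)} :=
    h₁ ▸ Submodule.mem_span_singleton_self _
  obtain ⟨a, ha⟩ := Submodule.mem_span_singleton.1 m₀
  obtain ⟨b, hb⟩ := Submodule.mem_span_singleton.1 m₁
  simp only [Prod.smul_mk, smul_eq_mul, mul_one, mul_zero, Prod.mk.injEq] at ha hb
  -- The lower right entry of `δ⁻¹ * δ = 1` exhibits a left inverse of `t`.
  have e := congrFun (congrFun δ.inv_mul 1) 1
  rw [Matrix.mul_apply, Fin.sum_univ_two, ← ha.2, ← hb.2, mul_zero, zero_add, ← mul_assoc,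
    Matrix.one_apply_eq] at e
  exact (h.2 t _ ht).1 (e ▸ isUnit_one)

theorem distant_of_isUnit (x : R) {y : R} (hy : IsUnit y) :
    Distant R (Submodule.span R {((1 : R), 0)}) (Submodule.span R {(x, y)}) := by
  obtain ⟨u, rfl⟩ := hy
  refine ⟨⟨!![1, 0; x, u], !![1, 0; -(↑u⁻¹ * x), ↑u⁻¹], ?_, ?_⟩, by simp, by simp⟩ <;>
    simp [Matrix.one_fin_two]

theorem exists_span_one_of_not_distant (h : NonunitsIdeal R) {q : Submodule R (R × R)}
    (hq : q ∈ ProjPoint R) (hd : ¬Distant R (Submodule.span R {((1 : R), 0)}) q) :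
    ∃ t : R, ¬IsUnit t ∧ Submodule.span R {((1 : R), t)} = q := by
  obtain ⟨x, y, ⟨δ, hx, hy⟩, rfl⟩ := hq
  have hyu : ¬IsUnit y := fun hu => hd (distant_of_isUnit x hu)
  have hxu : IsUnit x := by
    by_contra hxu
    have e := congrFun (congrFun δ.mul_inv 0) 0
    rw [Matrix.mul_apply, Fin.sum_univ_two, hx, hy, Matrix.one_apply_eq] at e
    exact h.1 _ _ (h.2 x _ hxu).2 (h.2 y _ hyu).2 (e ▸ isUnit_one)
  obtain ⟨u, rfl⟩ := hxu
  refine ⟨↑u⁻¹ * y, (h.2 y _ hyu).1, ?_⟩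
  rw [show ((1 : R), ↑u⁻¹ * y) = u⁻¹ • ((u : R), y) by simp [Units.smul_def]]
  exact Submodule.span_singleton_group_smul_eq R u⁻¹ _

/-- Over a local ring, `t ↦ R(1,t)` is a bijection from the non-units onto the parallel class of
`R(1,0)`. -/
noncomputable def nonunitsEquiv (h : NonunitsIdeal R) :
    {t : R // ¬IsUnit t} ≃ ParallelClass (Submodule.span R {((1 : R), (0 : R))}) :=
  Equiv.ofBijective
    (fun t => ⟨Submodule.span R {(1, t.1)}, span_one_mem t.1, not_distant_span_one h t.2⟩)
    ⟨fun _ _ hst => Subtype.ext (span_one_injective (Subtype.ext_iff.1 hst)), fun q => by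
      obtain ⟨t, ht, hq⟩ := exists_span_one_of_not_distant h q.2.1 q.2.2
      exact ⟨⟨t, ht⟩, Subtype.ext hq⟩⟩

end BaseClass

/-- For a local ring, every parallel class of `P(R)` has exactly `card (rad R)` elements. -/
theorem stmt_17 {R : Type*} [Ring R] (h : NonunitsIdeal R) :
    ∀ p ∈ ProjPoint R,
      Cardinal.mk {q : Submodule R (R × R) // q ∈ ProjPoint R ∧ ¬Distant R p q} =
        Cardinal.mk {x : R // ¬IsUnit x} := by
  rintro _ ⟨_, _, ⟨γ, rfl, rfl⟩, rfl⟩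
  have hp : Submodule.span R {(γ.val 0 0, γ.val 0 1)} =
      ptAct R γ (Submodule.span R {((1 : R), (0 : R))}) := by
    rw [ptAct_span]
    simp [rowMul]
  rw [hp]
  exact Cardinal.mk_congr ((nonunitsEquiv h).trans (parallelClassEquiv γ _)).symm
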